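/- Let d ≥ 1 and let Ω = {0,1}^d (functions Fin d → Bool). Let p_1, …, p_M : Ω → ℝ be strictly positive with Σ_{x∈Ω} p_k(x) = 1 for each k, let w_1, …, w_M > 0 with Σ_k w_k = 1, and let p(x) = Σ_k w_k p_k(x). For x ∈ Ω and i, let x^i denote x with its i-th coordinate flipped. Then for every f : Ω → ℝ: (1/(2d)) Σ_{x∈Ω} Σ_{i=1}^{d} (f(x) − f(x^i))² · p(x) p(x^i)/(p(x) + p(x^i)) ≥ Σ_{k=1}^{M} w_k · (1/(2d)) Σ_{x∈Ω} Σ_{i=1}^{d} (f(x) − f(x^i))² · p_k(x) p_k(x^i)/(p_k(x) + p_k(x^i)). -/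

import Mathlib

/-!
The weight `a * b / (a + b)` of an edge is the conductance of two conductors `a` and `b` in series,
so it is the least energy `a * t ^ 2 + b * (1 - t) ^ 2` of a unit voltage split as `t + (1 - t)`.
A minimum of functions linear in `(a, b)` is superadditive, and it is homogeneous. The Dirichlet
form is a combination of such weights with nonnegative coefficients, so it is also superadditive and
homogeneous in the stationary weights, hence concave.
-/

section ParallelSum

variable {𝕜 κ : Type*} [Field 𝕜]

/-- The parallel sum of two scalars, half their harmonic mean. At `a = b = 0` division by zero gives
`0`, which is the continuous extension from nonnegative arguments. -/
def parallelSum (a b : 𝕜) : 𝕜 := a * b / (a + b)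

theorem parallelSum_mul_mul_left (c a b : 𝕜) :
    parallelSum (c * a) (c * b) = c * parallelSum a b := by
  rcases eq_or_ne c 0 with rfl | hc
  · simp [parallelSum]
  · rw [parallelSum, parallelSum, ← mul_add, mul_assoc, mul_div_mul_left _ _ hc,
      mul_left_comm, mul_div_assoc]

variable [LinearOrder 𝕜] [IsStrictOrderedRing 𝕜]

theorem parallelSum_le {a b : 𝕜} (ha : 0 ≤ a) (hb : 0 ≤ b) (t : 𝕜) :
    parallelSum a b ≤ a * t ^ 2 + b * (1 - t) ^ 2 := by
  have completed_square :
      (a * t ^ 2 + b * (1 - t) ^ 2) * (a + b) = a * b + ((a + b) * t - b) ^ 2 := by ring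
  refine div_le_of_le_mul₀ (by positivity) (by positivity) ?_
  rw [completed_square]
  exact le_add_of_nonneg_right (sq_nonneg _)

theorem exists_parallelSum_eq {a b : 𝕜} (ha : 0 ≤ a) (hb : 0 ≤ b) :
    ∃ t, parallelSum a b = a * t ^ 2 + b * (1 - t) ^ 2 := by
  rcases (add_nonneg ha hb).eq_or_lt' with hab | hab
  · obtain ⟨rfl, rfl⟩ := (add_eq_zero_iff_of_nonneg ha hb).mp hab
    exact ⟨0, by simp [parallelSum]⟩
  · refine ⟨b / (a + b), ?_⟩
    rw [parallelSum]
    field_simp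
    ring

theorem sum_parallelSum_le (s : Finset κ) {a b : κ → 𝕜}
    (ha : ∀ k ∈ s, 0 ≤ a k) (hb : ∀ k ∈ s, 0 ≤ b k) :
    ∑ k ∈ s, parallelSum (a k) (b k) ≤ parallelSum (∑ k ∈ s, a k) (∑ k ∈ s, b k) := by
  obtain ⟨t, ht⟩ := exists_parallelSum_eq (Finset.sum_nonneg ha) (Finset.sum_nonneg hb)
  calc ∑ k ∈ s, parallelSum (a k) (b k)
      ≤ ∑ k ∈ s, (a k * t ^ 2 + b k * (1 - t) ^ 2) :=
        Finset.sum_le_sum fun k hk => parallelSum_le (ha k hk) (hb k hk) t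
    _ = parallelSum (∑ k ∈ s, a k) (∑ k ∈ s, b k) := by
        rw [ht, Finset.sum_add_distrib, Finset.sum_mul, Finset.sum_mul]

end ParallelSum

section DirichletForm

variable {𝕜 Ω ι κ : Type*} [Field 𝕜] [Fintype Ω] [Fintype ι]

/-- The Dirichlet form at `f` of the chain with stationary weights `q` that picks `i` uniformly and
goes from `x` to `move i x` with probability `q (move i x) / (q x + q (move i x))`, for involutions
`move i`. Glauber dynamics on the hypercube is the case where `move i` flips the `i`-th coordinate.
-/
def glauberDirichletForm (move : ι → Ω → Ω) (q f : Ω → 𝕜) : 𝕜 :=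
  1 / (2 * (Fintype.card ι : 𝕜)) *
    ∑ x, ∑ i, (f x - f (move i x)) ^ 2 * parallelSum (q x) (q (move i x))

theorem glauberDirichletForm_smul (move : ι → Ω → Ω) (c : 𝕜) (q f : Ω → 𝕜) :
    glauberDirichletForm move (c • q) f = c * glauberDirichletForm move q f := by
  simp only [glauberDirichletForm, Pi.smul_apply, smul_eq_mul, parallelSum_mul_mul_left,
    mul_left_comm _ c, ← Finset.mul_sum]

variable [LinearOrder 𝕜] [IsStrictOrderedRing 𝕜]

theorem sum_glauberDirichletForm_le (move : ι → Ω → Ω) (s : Finset κ) {q : κ → Ω → 𝕜}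
    (hq : ∀ k ∈ s, ∀ x, 0 ≤ q k x) (f : Ω → 𝕜) :
    ∑ k ∈ s, glauberDirichletForm move (q k) f ≤ glauberDirichletForm move (∑ k ∈ s, q k) f := by
  simp only [glauberDirichletForm, ← Finset.mul_sum, Finset.sum_apply]
  rw [Finset.sum_comm]
  simp_rw [Finset.sum_comm (s := s), ← Finset.mul_sum]
  gcongr with x _ i _
  exact sum_parallelSum_le s (fun k hk => hq k hk x) (fun k hk => hq k hk (move i x))

theorem stmt_13_general (move : ι → Ω → Ω) (s : Finset κ) {p : κ → Ω → 𝕜} {w : κ → 𝕜}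
    (hp : ∀ k ∈ s, ∀ x, 0 ≤ p k x) (hw : ∀ k ∈ s, 0 ≤ w k) (f : Ω → 𝕜) :
    ∑ k ∈ s, w k * glauberDirichletForm move (p k) f ≤
      glauberDirichletForm move (∑ k ∈ s, w k • p k) f := by
  simp_rw [← glauberDirichletForm_smul]
  exact sum_glauberDirichletForm_le move s (fun k hk x => mul_nonneg (hw k hk) (hp k hk x)) f

end DirichletForm

theorem stmt_13 (d : ℕ) (hd : 1 ≤ d) (M : ℕ)
    (p : Fin M → (Fin d → Bool) → ℝ)
    (hppos : ∀ k x, 0 < p k x) (hpsum : ∀ k, ∑ x, p k x = 1)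
    (w : Fin M → ℝ) (hw : ∀ k, 0 < w k) (hwsum : ∑ k, w k = 1)
    (pm : (Fin d → Bool) → ℝ) (hpm : ∀ x, pm x = ∑ k, w k * p k x) :
    ∀ f : (Fin d → Bool) → ℝ,
      ∑ k, w k * ((1 / (2 * (d : ℝ))) * ∑ x, ∑ i,
          (f x - f (Function.update x i (!x i))) ^ 2 *
            (p k x * p k (Function.update x i (!x i)) /
              (p k x + p k (Function.update x i (!x i)))))
        ≤ (1 / (2 * (d : ℝ))) * ∑ x, ∑ i,
            (f x - f (Function.update x i (!x i))) ^ 2 *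
              (pm x * pm (Function.update x i (!x i)) /
                (pm x + pm (Function.update x i (!x i)))) := by
  intro f
  have pm_eq_mixture : pm = ∑ k, w k • p k := by
    ext x
    simp [hpm]
  simpa only [glauberDirichletForm, parallelSum, Fintype.card_fin, ← pm_eq_mixture] using
    stmt_13_general (fun i x => Function.update x i (!x i)) Finset.univ
      (fun k _ x => (hppos k x).le) (fun k _ => (hw k).le) f
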